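/- arXiv:1807.00719 — 2 statements merged into one kernel-verified Lean document; each statement's English description precedes it below -/
import Mathlib

section
/- Let σ_w² > 0, ε > 0, and P ≥ 0 be real numbers. Let μ be a probability measure on ℝ (the law of the transmitted signal) such that y ↦ y² is integrable with respect to μ with ∫ x² dμ(x) = P, and let ν := Measure.map (fun p : ℝ × ℝ => p.1 + p.2) (μ.prod (gaussianReal 0 σ_w²)) be the law of the warden's observation under the alternative hypothesis. If the covertness constraint klDiv ν (gaussianReal 0 σ_w²) ≤ ENNReal.ofReal (2 * ε²) holds, then (1/2) * (P/σ_w² + Real.log (σ_w²/(P + σ_w²))) ≤ 2 * ε². In particular, the transmit power P is at most the unique positive solution P_x^ε of (1/2) * (P/σ_w² + log(σ_w²/(P + σ_w²))) = 2ε². -/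
open MeasureTheory ProbabilityTheory
open scoped ENNReal NNReal Classical

/-- Kullback–Leibler divergence of `μ` from `ν`: `∫ log (dμ/dν) dμ` when `μ ≪ ν` and the
log-likelihood ratio is `μ`-integrable, and `∞` otherwise. -/
noncomputable def klDiv {α : Type*} [MeasurableSpace α] (μ ν : Measure α) : ℝ≥0∞ :=
  if μ ≪ ν ∧ Integrable (llr μ ν) μ then ENNReal.ofReal (∫ x, llr μ ν x ∂μ) else ⊤

open Real in
/-- Donsker–Varadhan lower bound for the Kullback–Leibler integral. -/
lemma integral_sub_log_integral_exp_le_integral_llr {α : Type*} [MeasurableSpace α]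
    {ν γ : Measure α} [IsProbabilityMeasure ν] [IsProbabilityMeasure γ] {f : α → ℝ}
    (hνγ : ν ≪ γ) (hllr : Integrable (llr ν γ) ν) (hf : Integrable f ν)
    (hexp : Integrable (fun x => exp (f x)) γ) :
    ∫ x, f x ∂ν - log (∫ x, exp (f x) ∂γ) ≤ ∫ x, llr ν γ x ∂ν := by
  have := isProbabilityMeasure_tilted hexp
  have h := InformationTheory.integral_llr_add_sub_measure_univ_nonneg
    (hνγ.trans (absolutelyContinuous_tilted hexp))
    (integrable_llr_tilted_right hνγ hf hllr hexp)
  rw [integral_llr_tilted_right hνγ hf hexp hllr] at h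
  simp only [probReal_univ] at h
  linarith

open Real in
lemma gaussianPDFReal_mul_exp_mul_sq (v : ℝ≥0) (a x : ℝ) (hv : 0 < v) :
    gaussianPDFReal 0 v x * exp (a * x ^ 2)
      = (√(2 * π * v))⁻¹ * exp (-(1 / (2 * v) - a) * x ^ 2) := by
  have hv' : (v : ℝ) ≠ 0 := by positivity
  rw [gaussianPDFReal, mul_assoc, ← exp_add]
  congr 2
  field_simp
  ring

open Real in
lemma integrable_exp_mul_sq_gaussianReal {v : ℝ≥0} {a : ℝ} (hv : 0 < v) (ha : a < 1 / (2 * v)) :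
    Integrable (fun x => exp (a * x ^ 2)) (gaussianReal 0 v) := by
  rw [gaussianReal_of_var_ne_zero _ hv.ne', integrable_withDensity_iff_integrable_smul'
    (measurable_gaussianPDF 0 v) (by simp [gaussianPDF_lt_top])]
  simp only [toReal_gaussianPDF, smul_eq_mul, gaussianPDFReal_mul_exp_mul_sq v a _ hv]
  exact (integrable_exp_neg_mul_sq (sub_pos.2 ha)).const_mul _

open Real in
lemma integral_exp_mul_sq_gaussianReal {v : ℝ≥0} {a : ℝ} (hv : 0 < v) (ha : a < 1 / (2 * v)) :
    ∫ x, exp (a * x ^ 2) ∂gaussianReal 0 v = √(1 / (1 - 2 * a * v)) := by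
  have hv' : (0 : ℝ) < v := hv
  have hd : 0 < 1 - 2 * a * v := by
    rw [lt_div_iff₀ (by positivity)] at ha
    linarith
  have he : 1 / (2 * (v : ℝ)) - a = (1 - 2 * a * v) / (2 * v) := by
    field_simp
  simp only [integral_gaussianReal_eq_integral_smul hv.ne', smul_eq_mul,
    gaussianPDFReal_mul_exp_mul_sq v a _ hv]
  rw [integral_const_mul, integral_gaussian, ← sqrt_inv, ← sqrt_mul (by positivity), he]
  congr 1
  field_simp

lemma integrable_sq_gaussianReal (v : ℝ≥0) :
    Integrable (fun x : ℝ => x ^ 2) (gaussianReal 0 v) :=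
  (memLp_id_gaussianReal 2).integrable_sq

lemma integral_sq_gaussianReal (v : ℝ≥0) : ∫ x, x ^ 2 ∂gaussianReal 0 v = v := by
  have h := variance_of_integral_eq_zero (μ := gaussianReal 0 v) (X := fun x => x)
    (by fun_prop) integral_id_gaussianReal
  rw [variance_fun_id_gaussianReal] at h
  exact h.symm

section SumOfIndependent

variable {μ ρ : Measure ℝ} [IsProbabilityMeasure μ] [IsProbabilityMeasure ρ]

lemma MeasureTheory.Integrable.of_integrable_sq (hμ : Integrable (fun x : ℝ => x ^ 2) μ) :
    Integrable (fun x : ℝ => x) μ :=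
  ((memLp_two_iff_integrable_sq (by fun_prop)).2 hμ).integrable one_le_two

lemma integrable_add_sq_prod (hμ : Integrable (fun x : ℝ => x ^ 2) μ)
    (hρ : Integrable (fun x : ℝ => x ^ 2) ρ) :
    Integrable (fun p : ℝ × ℝ => (p.1 + p.2) ^ 2) (μ.prod ρ) := by
  have h := ((hμ.comp_fst ρ).add
    ((hμ.of_integrable_sq.mul_prod hρ.of_integrable_sq).const_mul 2)).add (hρ.comp_snd μ)
  refine h.congr (ae_of_all _ fun p => ?_)
  simp only [Pi.add_apply]
  ring

lemma integral_add_sq_prod (hμ : Integrable (fun x : ℝ => x ^ 2) μ)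
    (hρ : Integrable (fun x : ℝ => x ^ 2) ρ) (hρ0 : ∫ x, x ∂ρ = 0) :
    ∫ p, (p.1 + p.2) ^ 2 ∂μ.prod ρ = ∫ x, x ^ 2 ∂μ + ∫ x, x ^ 2 ∂ρ := by
  have h1 := hμ.comp_fst ρ
  have h2 := (hμ.of_integrable_sq.mul_prod hρ.of_integrable_sq).const_mul 2
  have h3 := hρ.comp_snd μ
  have he : ∀ p : ℝ × ℝ, (p.1 + p.2) ^ 2 = p.1 ^ 2 + 2 * (p.1 * p.2) + p.2 ^ 2 := fun p => by ring
  simp only [he]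
  rw [integral_add (h1.fun_add h2) h3, integral_add h1 h2, integral_const_mul,
    integral_prod_mul (fun x => x) (fun x => x), hρ0, integral_fun_fst (fun x => x ^ 2),
    integral_fun_snd (fun x => x ^ 2)]
  simp

end SumOfIndependent

/-- Power bound of Theorem 1: under the covertness constraint `D(p₁‖p₀) ≤ 2ε²`, the
average transmit power `P` satisfies `(1/2)(P/σ² + log(σ²/(P+σ²))) ≤ 2ε²`. -/
theorem stmt_3 (σ2 : ℝ≥0) (hσ : 0 < σ2) (ε : ℝ) (hε : 0 < ε) (P : ℝ) (hP : 0 ≤ P)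
    (μ : Measure ℝ) [IsProbabilityMeasure μ]
    (hint : Integrable (fun x : ℝ => x ^ 2) μ)
    (hmom : ∫ x, x ^ 2 ∂μ = P)
    (hcov : klDiv (Measure.map (fun p : ℝ × ℝ => p.1 + p.2) (μ.prod (gaussianReal 0 σ2)))
        (gaussianReal 0 σ2) ≤ ENNReal.ofReal (2 * ε ^ 2)) :
    (1/2) * (P / (σ2 : ℝ) + Real.log ((σ2 : ℝ) / (P + (σ2 : ℝ)))) ≤ 2 * ε ^ 2 := by
  have hs : (0 : ℝ) < σ2 := hσ
  have hadd : Measurable fun p : ℝ × ℝ => p.1 + p.2 := by fun_prop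
  have hγ := integrable_sq_gaussianReal σ2
  have hsum := integrable_add_sq_prod hint hγ
  have hsum_eq := integral_add_sq_prod hint hγ integral_id_gaussianReal
  rw [hmom, integral_sq_gaussianReal] at hsum_eq
  set ν := Measure.map (fun p : ℝ × ℝ => p.1 + p.2) (μ.prod (gaussianReal 0 σ2)) with hν
  have : IsProbabilityMeasure ν := Measure.isProbabilityMeasure_map hadd.aemeasurable
  have hν_int : Integrable (fun x : ℝ => x ^ 2) ν :=
    (integrable_map_measure (by fun_prop) hadd.aemeasurable).2 hsum
  have hν_eq : ∫ x, x ^ 2 ∂ν = P + σ2 := by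
    rw [hν, integral_map hadd.aemeasurable (by fun_prop), hsum_eq]
  unfold klDiv at hcov
  split_ifs at hcov with hac
  · rw [ENNReal.ofReal_le_ofReal_iff (by positivity)] at hcov
    refine le_trans ?_ hcov
    -- The log-density of `N(0, P + σ2)` relative to `N(0, σ2)` is `a * x ^ 2` up to a constant.
    set a : ℝ := P / (2 * σ2 * (P + σ2)) with ha_def
    have ha : a < 1 / (2 * σ2) := by
      rw [ha_def, div_lt_div_iff₀ (by positivity) (by positivity)]
      nlinarith
    have hdv := integral_sub_log_integral_exp_le_integral_llr hac.1 hac.2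
      (hν_int.const_mul a) (integrable_exp_mul_sq_gaussianReal hσ ha)
    have hvar : 1 / (1 - 2 * a * σ2) = ((σ2 : ℝ) / (P + σ2))⁻¹ := by
      have : 1 - 2 * a * σ2 = (σ2 : ℝ) / (P + σ2) := by
        rw [ha_def]
        field_simp
        ring
      rw [this, one_div]
    have hmean : a * (P + σ2) = P / (2 * σ2) := by
      rw [ha_def]
      field_simp
    rw [integral_const_mul, hν_eq, integral_exp_mul_sq_gaussianReal hσ ha, hvar, hmean,
      Real.log_sqrt (by positivity), Real.log_inv] at hdv
    refine le_of_eq_of_le ?_ hdv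
    field_simp
    ring
  · exact absurd (top_le_iff.1 hcov) ENNReal.ofReal_ne_top
end

section
/- Let σ² and Py be real numbers with 0 < σ² < Py, and define the threshold φ* := ((Py * σ²)/(Py - σ²)) * Real.log (Py/σ²). Then for every y : ℝ, gaussianPDFReal 0 Py y ≥ gaussianPDFReal 0 σ² y if and only if y² ≥ φ*. In other words, the likelihood ratio test p₁(y)/p₀(y) ≥ 1 between the warden's observation densities under the two hypotheses is equivalent to the energy-detector rule y² ≥ φ*, where, writing Py = P_x + σ_w², φ* = ((P_x + σ_w²)σ_w²/P_x)·ln((P_x + σ_w²)/σ_w²). -/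
open MeasureTheory ProbabilityTheory
open scoped ENNReal NNReal

lemma log_gaussianPDFReal (μ : ℝ) {v : ℝ≥0} (hv : 0 < v) (x : ℝ) :
    Real.log (gaussianPDFReal μ v x) =
      -(Real.log (2 * Real.pi) + Real.log v) / 2 - (x - μ) ^ 2 / (2 * v) := by
  have hv' : (0 : ℝ) < v := hv
  have hπ : 0 < 2 * Real.pi := by positivity
  rw [gaussianPDFReal, Real.log_mul (by positivity) (Real.exp_pos _).ne', Real.log_inv,
    Real.log_sqrt (by positivity), Real.log_mul hπ.ne' hv'.ne', Real.log_exp]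
  ring

/-- The likelihood ratio test `p₁(y)/p₀(y) ≥ 1` is equivalent to the energy-detector rule
`y² ≥ φ*` with `φ* = ((Py·σ²)/(Py − σ²))·log(Py/σ²)`. -/
theorem stmt_16 (σ2 Py : ℝ≥0) (hσ : 0 < σ2) (hlt : σ2 < Py) (φ : ℝ)
    (hφ : φ = (((Py : ℝ) * (σ2 : ℝ)) / ((Py : ℝ) - (σ2 : ℝ))) * Real.log ((Py : ℝ) / (σ2 : ℝ))) :
    ∀ y : ℝ, gaussianPDFReal 0 Py y ≥ gaussianPDFReal 0 σ2 y ↔ y ^ 2 ≥ φ := by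
  intro y
  have hPy : 0 < Py := hσ.trans hlt
  have hσ' : (0 : ℝ) < σ2 := hσ
  have hPy' : (0 : ℝ) < Py := hPy
  have hd : (0 : ℝ) < Py - σ2 := sub_pos.2 hlt
  have hdiff : Real.log (gaussianPDFReal 0 Py y) - Real.log (gaussianPDFReal 0 σ2 y) =
      ((Py : ℝ) - σ2) / (2 * Py * σ2) * (y ^ 2 - φ) := by
    rw [log_gaussianPDFReal 0 hPy, log_gaussianPDFReal 0 hσ, hφ,
      Real.log_div hPy'.ne' hσ'.ne']
    field_simp
    ring
  have hc : 0 < ((Py : ℝ) - σ2) / (2 * Py * σ2) := by positivity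
  rw [ge_iff_le, ge_iff_le,
    ← Real.log_le_log_iff (gaussianPDFReal_pos 0 σ2 y hσ.ne') (gaussianPDFReal_pos 0 Py y hPy.ne'),
    ← sub_nonneg, hdiff, mul_nonneg_iff_of_pos_left hc, sub_nonneg]
end
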